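/- (The nonstandard flat in orthoplex-type RAAGs.) Let k ≥ 0 and suppose Γ contains 2(k+1) distinct vertices a_0, b_0, a_1, b_1, …, a_k, b_k such that for all i ≠ j every one of a_i, b_i is adjacent in Γ to every one of a_j, b_j, while a_i is not adjacent to b_i for each i. For each i define γ_i : ℤ → A_Γ by γ_i(0) = 1, γ_i(m) = the alternating positive word of length m beginning with a_i (i.e., a_i b_i a_i b_i ⋯) for m > 0, and γ_i(m) = the alternating positive word of length |m| beginning with b_i (i.e., b_i a_i b_i a_i ⋯) for m < 0. Define F : ℤ^{k+1} → A_Γ by F(x_0, …, x_k) = γ_0(x_0)·γ_1(x_1)⋯γ_k(x_k) (these factors pairwise commute). Then F is injective, and for every x ∈ ℤ^{k+1} one has h(F(x)) = |x_0| + |x_1| + ⋯ + |x_k| and |F(x)| = |x_0| + |x_1| + ⋯ + |x_k|. In particular, F carries the ℓ¹-sphere of radius r in ℤ^{k+1} into the sphere of radius r of the word metric on A_Γ. -/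

import Mathlib

/-- The commutator relators of the right-angled Artin group on the graph `Γ`. -/
def raagRels {V : Type*} (Γ : SimpleGraph V) : Set (FreeGroup V) :=
  {r | ∃ u v : V, Γ.Adj u v ∧
    r = FreeGroup.of u * FreeGroup.of v * (FreeGroup.of u)⁻¹ * (FreeGroup.of v)⁻¹}

/-- The right-angled Artin group `A_Γ` on the graph `Γ`. -/
abbrev RAAG {V : Type*} (Γ : SimpleGraph V) : Type _ :=
  PresentedGroup (raagRels Γ)

/-- The generator of `A_Γ` corresponding to the vertex `v`. -/
def RAAG.gen {V : Type*} (Γ : SimpleGraph V) (v : V) : RAAG Γ :=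
  PresentedGroup.of v

/-- Word length of `g` with respect to a generating set `X`: the least `n` such that
`g` is a product of `n` elements of `X ∪ X⁻¹`. -/
noncomputable def wlen {G : Type*} [Group G] (X : Set G) (g : G) : ℕ :=
  sInf {n | ∃ l : List G, l.length = n ∧ (∀ x ∈ l, x ∈ X ∨ x⁻¹ ∈ X) ∧ l.prod = g}

/-- Word length in `A_Γ` with respect to the vertex generating set. -/
noncomputable def RAAG.wordLength {V : Type*} (Γ : SimpleGraph V) (g : RAAG Γ) : ℕ :=
  wlen (Set.range (RAAG.gen Γ)) g

/-- The letter `v^e` (with `e = true` for `v` and `e = false` for `v⁻¹`). -/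
def RAAG.letter {V : Type*} (Γ : SimpleGraph V) (v : V) (e : Bool) : RAAG Γ :=
  if e then RAAG.gen Γ v else (RAAG.gen Γ v)⁻¹

/-- The alternating product `x y x y ⋯` of length `n`. -/
def altProd {G : Type*} [Monoid G] (x y : G) : ℕ → G
  | 0 => 1
  | n + 1 => x * altProd y x n

/-!
For positive words, i.e. elements of the submonoid generated by the vertices, the word length equals
the height: each letter raises the height by at most one, so a word of height `r` has at least `r`
letters. The height of `F x` is visibly `∑ i, |x i|`.

For injectivity, kill all generators except `a i` and `b i` (possible since these are not adjacent,
so no relator survives) and let `a i`, `b i` act on `ℤ` by the reflections `t ↦ 1 - t` and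
`t ↦ -1 - t` of the infinite dihedral group. The image of `F x` carries `0` to `x i`.
-/

section AltProd

variable {M N : Type*} [Monoid M] [Monoid N] {x y : M}

theorem map_altProd (f : M →* N) (x y : M) (n : ℕ) :
    f (altProd x y n) = altProd (f x) (f y) n := by
  induction n generalizing x y with
  | zero => exact map_one f
  | succ n ih => rw [altProd, map_mul, ih, altProd]

theorem altProd_self (x : M) (n : ℕ) : altProd x x n = x ^ n := by
  induction n with
  | zero => exact (pow_zero x).symm
  | succ n ih => rw [altProd, ih, pow_succ']

theorem altProd_mem {S : Submonoid M} (hx : x ∈ S) (hy : y ∈ S) (n : ℕ) :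
    altProd x y n ∈ S := by
  induction n generalizing x y with
  | zero => exact S.one_mem
  | succ n ih => exact S.mul_mem hx (ih hy hx)

theorem altProd_subLeft_subLeft_neg_zero {A : Type*} [AddGroup A] (c : A) (n : ℕ) :
    altProd (Equiv.subLeft c : Equiv.Perm A) (Equiv.subLeft (-c)) n 0 = n • c := by
  induction n generalizing c with
  | zero => simp [altProd]
  | succ n ih =>
    have ih_neg := ih (-c)
    rw [neg_neg] at ih_neg
    rw [altProd, Equiv.Perm.mul_apply, ih_neg, Equiv.subLeft_apply, neg_nsmul, sub_neg_eq_add,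
      succ_nsmul']

/-- The alternating bi-infinite path `…, y x, y, 1, x, x y, …`; the curve `γ_i` of the theorem is
`altLine` of the generators `a_i`, `b_i`. -/
def altLine (x y : M) (m : ℤ) : M :=
  if 0 ≤ m then altProd x y m.toNat else altProd y x (-m).toNat

theorem map_altLine (f : M →* N) (x y : M) (m : ℤ) :
    f (altLine x y m) = altLine (f x) (f y) m := by
  simp only [altLine, apply_ite f, map_altProd]

theorem altLine_self (x : M) (m : ℤ) : altLine x x m = x ^ m.natAbs := by
  unfold altLine
  split_ifs <;> rw [altProd_self] <;> congr 1 <;> omega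

theorem altLine_mem {S : Submonoid M} (hx : x ∈ S) (hy : y ∈ S) (m : ℤ) :
    altLine x y m ∈ S := by
  unfold altLine
  split_ifs
  exacts [altProd_mem hx hy _, altProd_mem hy hx _]

theorem commute_altLine_right {z : M} (hx : Commute z x) (hy : Commute z y) (m : ℤ) :
    Commute z (altLine x y m) := by
  have mem_centralizer {w : M} : w ∈ Submonoid.centralizer {z} ↔ Commute z w := by
    simp [Submonoid.mem_centralizer_iff, commute_iff_eq]
  exact mem_centralizer.1 (altLine_mem (mem_centralizer.2 hx) (mem_centralizer.2 hy) m)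

theorem commute_altLine_altLine {x' y' : M} (hxx' : Commute x x') (hxy' : Commute x y')
    (hyx' : Commute y x') (hyy' : Commute y y') (m n : ℤ) :
    Commute (altLine x y m) (altLine x' y' n) :=
  (commute_altLine_right (commute_altLine_right hxx' hxy' n).symm
    (commute_altLine_right hyx' hyy' n).symm m).symm

theorem altLine_subLeft_subLeft_neg_zero {A : Type*} [AddGroup A] (c : A) (m : ℤ) :
    altLine (Equiv.subLeft c : Equiv.Perm A) (Equiv.subLeft (-c)) m 0 = m • c := by
  unfold altLine
  split_ifs with hm
  · rw [altProd_subLeft_subLeft_neg_zero, ← natCast_zsmul, Int.toNat_of_nonneg hm]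
  · have swapped := altProd_subLeft_subLeft_neg_zero (-c) (-m).toNat
    rw [neg_neg] at swapped
    rw [swapped, ← natCast_zsmul, Int.toNat_of_nonneg (by omega), zsmul_neg, neg_zsmul, neg_neg]

/-- The ordered product of the alternating paths of the pairs `x i`, `y i`; the map `F` of the
theorem is `altFlat` of the generators `a_i`, `b_i`. No commutation is assumed, so the order of the
factors is part of the definition. -/
def altFlat {n : ℕ} (x y : Fin n → M) (m : Fin n → ℤ) : M :=
  (List.ofFn fun i => altLine (x i) (y i) (m i)).prod

variable {n : ℕ}

theorem map_altFlat (f : M →* N) (x y : Fin n → M) (m : Fin n → ℤ) :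
    f (altFlat x y m) = altFlat (fun i => f (x i)) (fun i => f (y i)) m := by
  simp only [altFlat, map_list_prod, List.map_ofFn, Function.comp_def, map_altLine]

theorem altFlat_mem {S : Submonoid M} {x y : Fin n → M} (hx : ∀ i, x i ∈ S) (hy : ∀ i, y i ∈ S)
    (m : Fin n → ℤ) : altFlat x y m ∈ S := by
  refine S.list_prod_mem ?_
  rw [List.forall_mem_ofFn_iff]
  exact fun i => altLine_mem (hx i) (hy i) (m i)

theorem altFlat_const {C : Type*} [CommMonoid C] (c : C) (m : Fin n → ℤ) :
    altFlat (fun _ => c) (fun _ => c) m = c ^ ∑ i, (m i).natAbs := by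
  simp only [altFlat, altLine_self, List.prod_ofFn, Finset.prod_pow_eq_pow_sum]

theorem altFlat_eq_altLine {x y : Fin n → M} {i : Fin n} (hx : ∀ j ≠ i, x j = 1)
    (hy : ∀ j ≠ i, y j = 1) (m : Fin n → ℤ) : altFlat x y m = altLine (x i) (y i) (m i) := by
  have other_factors (j : Fin n) (hj : j ≠ i) (_ : j ∈ List.finRange n) :
      altLine (x j) (y j) (m j) = 1 := by
    rw [hx j hj, hy j hj, altLine_self, one_pow]
  rw [altFlat, List.ofFn_eq_map,
    List.prod_map_eq_pow_single i (fun j => altLine (x j) (y j) (m j)) other_factors,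
    List.count_finRange, pow_one]

end AltProd

section WordLength

variable {G : Type*} [Group G] {X : Set G} {h : G →* Multiplicative ℤ}

theorem toAdd_map_list_prod_le_length (hX : ∀ x ∈ X, h x = Multiplicative.ofAdd 1) {l : List G}
    (hl : ∀ x ∈ l, x ∈ X ∨ x⁻¹ ∈ X) : Multiplicative.toAdd (h l.prod) ≤ l.length := by
  have letter_le (x : G) (hx : x ∈ l) : h x ≤ Multiplicative.ofAdd 1 := by
    rcases hl x hx with hx | hx
    · exact (hX x hx).le
    · rw [← inv_inv x, map_inv, hX _ hx]
      decide
  have prod_le := List.prod_le_pow_card (l.map h) _ (List.forall_mem_map.2 letter_le)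
  rw [← map_list_prod, List.length_map] at prod_le
  simpa using Multiplicative.toAdd_le.2 prod_le

theorem toAdd_map_list_prod_eq_length (hX : ∀ x ∈ X, h x = Multiplicative.ofAdd 1) {l : List G}
    (hl : ∀ x ∈ l, x ∈ X) : Multiplicative.toAdd (h l.prod) = l.length := by
  rw [map_list_prod,
    List.prod_eq_pow_card _ _ (List.forall_mem_map.2 fun x hx => hX x (hl x hx))]
  simp

theorem wlen_eq_toAdd_map_of_mem_closure (hX : ∀ x ∈ X, h x = Multiplicative.ofAdd 1) {g : G}
    (hg : g ∈ Submonoid.closure X) : (wlen X g : ℤ) = Multiplicative.toAdd (h g) := by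
  obtain ⟨l, hl, rfl⟩ := Submonoid.exists_list_of_mem_closure hg
  have length_isLeast : IsLeast {n | ∃ l' : List G, l'.length = n ∧
      (∀ x ∈ l', x ∈ X ∨ x⁻¹ ∈ X) ∧ l'.prod = l.prod} l.length := by
    refine ⟨⟨l, rfl, fun x hx => Or.inl (hl x hx), rfl⟩, ?_⟩
    rintro _ ⟨l', rfl, hl', hprod⟩
    have height_le := toAdd_map_list_prod_le_length hX hl'
    rw [hprod, toAdd_map_list_prod_eq_length hX hl] at height_le
    exact_mod_cast height_le
  rw [wlen, length_isLeast.csInf_eq, toAdd_map_list_prod_eq_length hX hl]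

end WordLength

namespace RAAG

variable {V : Type*} {Γ : SimpleGraph V}

theorem commute_gen_of_adj {u v : V} (huv : Γ.Adj u v) : Commute (gen Γ u) (gen Γ v) :=
  commutatorElement_eq_one_iff_commute.1 (PresentedGroup.one_of_mem ⟨u, v, huv, rfl⟩)

/-- The universal property of `A_Γ`: a map from the vertices to a group sending adjacent vertices to
commuting elements extends to a homomorphism. -/
def lift {G : Type*} [Group G] (φ : V → G) (hφ : ∀ u v, Γ.Adj u v → Commute (φ u) (φ v)) :
    RAAG Γ →* G :=
  PresentedGroup.toGroup (f := φ) <| by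
    rintro _ ⟨u, v, huv, rfl⟩
    simpa [commutatorElement_def] using commutatorElement_eq_one_iff_commute.2 (hφ u v huv)

theorem lift_gen {G : Type*} [Group G] (φ : V → G)
    (hφ : ∀ u v, Γ.Adj u v → Commute (φ u) (φ v)) (v : V) : lift φ hφ (gen Γ v) = φ v :=
  PresentedGroup.toGroup.of _

/-- The height homomorphism `A_Γ → ℤ`, sending every vertex to `1`. -/
def height (Γ : SimpleGraph V) : RAAG Γ →* Multiplicative ℤ :=
  lift (fun _ => Multiplicative.ofAdd 1) fun _ _ _ => Commute.all _ _

theorem height_gen (v : V) : height Γ (gen Γ v) = Multiplicative.ofAdd 1 :=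
  lift_gen _ _ v

open Classical in
theorem exists_hom_of_not_adj {G : Type*} [Group G] {p q : V} (hpq : p ≠ q) (hnadj : ¬ Γ.Adj p q)
    (x y : G) : ∃ f : RAAG Γ →* G, f (gen Γ p) = x ∧ f (gen Γ q) = y ∧
      ∀ v, v ≠ p → v ≠ q → f (gen Γ v) = 1 := by
  let φ : V → G := fun v => if v = p then x else if v = q then y else 1
  have hφ (u v : V) (huv : Γ.Adj u v) : Commute (φ u) (φ v) := by
    have hnadj' : ¬ Γ.Adj q p := fun hqp => hnadj hqp.symm
    simp only [φ]
    split_ifs <;> simp_all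
  refine ⟨lift φ hφ, ?_, ?_, fun v hvp hvq => ?_⟩
  · simp [lift_gen, φ]
  · simp [lift_gen, φ, hpq.symm]
  · simp [lift_gen, φ, hvp, hvq]

variable {n : ℕ} {a b : Fin n → V}

theorem exists_hom_altFlat_apply_zero (ha : Function.Injective a) (hb : Function.Injective b)
    (hab : ∀ i j, a i ≠ b j) {i : Fin n} (hnadj : ¬ Γ.Adj (a i) (b i)) :
    ∃ f : RAAG Γ →* Equiv.Perm ℤ, ∀ x : Fin n → ℤ,
      f (altFlat (fun j => gen Γ (a j)) (fun j => gen Γ (b j)) x) 0 = x i := by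
  obtain ⟨f, hfa, hfb, hf_one⟩ :=
    exists_hom_of_not_adj (hab i i) hnadj (Equiv.subLeft (1 : ℤ)) (Equiv.subLeft (-1))
  have hfa_one (j : Fin n) (hj : j ≠ i) : f (gen Γ (a j)) = 1 :=
    hf_one _ (ha.ne hj) (hab j i)
  have hfb_one (j : Fin n) (hj : j ≠ i) : f (gen Γ (b j)) = 1 :=
    hf_one _ (hab i j).symm (hb.ne hj)
  refine ⟨f, fun x => ?_⟩
  rw [map_altFlat, altFlat_eq_altLine hfa_one hfb_one, hfa, hfb, altLine_subLeft_subLeft_neg_zero,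
    smul_eq_mul, mul_one]

theorem altFlat_gen_injective (ha : Function.Injective a) (hb : Function.Injective b)
    (hab : ∀ i j, a i ≠ b j) (hnadj : ∀ i, ¬ Γ.Adj (a i) (b i)) :
    Function.Injective (altFlat (fun i => gen Γ (a i)) (fun i => gen Γ (b i))) := by
  intro x y hxy
  funext i
  obtain ⟨f, hf⟩ := exists_hom_altFlat_apply_zero ha hb hab (hnadj i)
  rw [← hf x, ← hf y, hxy]

theorem toAdd_map_altFlat_gen {h : RAAG Γ →* Multiplicative ℤ}
    (hh : ∀ v, h (gen Γ v) = Multiplicative.ofAdd 1) (x : Fin n → ℤ) :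
    Multiplicative.toAdd (h (altFlat (fun i => gen Γ (a i)) (fun i => gen Γ (b i)) x)) =
      ∑ i, |x i| := by
  simp only [map_altFlat, hh, altFlat_const]
  simp

theorem wordLength_altFlat_gen (x : Fin n → ℤ) :
    wordLength Γ (altFlat (fun i => gen Γ (a i)) (fun i => gen Γ (b i)) x) =
      ∑ i, (x i).natAbs := by
  have gen_mem (v : V) : gen Γ v ∈ Submonoid.closure (Set.range (gen Γ)) :=
    Submonoid.subset_closure (Set.mem_range_self v)
  have flat_mem := altFlat_mem (fun i => gen_mem (a i)) (fun i => gen_mem (b i)) x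
  have length_eq_height :=
    wlen_eq_toAdd_map_of_mem_closure (Set.forall_mem_range.2 height_gen) flat_mem
  rw [toAdd_map_altFlat_gen height_gen] at length_eq_height
  rw [wordLength]
  zify
  exact length_eq_height

end RAAG

theorem raag_orthoplex_nonstandard_flat_general {V : Type*} (Γ : SimpleGraph V)
    {n : ℕ} (a b : Fin n → V)
    (ha : Function.Injective a) (hb : Function.Injective b)
    (hab : ∀ i j : Fin n, a i ≠ b j)
    (hadj : ∀ i j : Fin n, i ≠ j →
      Γ.Adj (a i) (a j) ∧ Γ.Adj (a i) (b j) ∧ Γ.Adj (b i) (a j) ∧ Γ.Adj (b i) (b j))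
    (hnadj : ∀ i : Fin n, ¬ Γ.Adj (a i) (b i))
    (h : RAAG Γ →* Multiplicative ℤ)
    (hh : ∀ v : V, h (RAAG.gen Γ v) = Multiplicative.ofAdd (1 : ℤ))
    (γ : Fin n → ℤ → RAAG Γ)
    (hγ : ∀ (i : Fin n) (m : ℤ), γ i m =
      if 0 ≤ m then altProd (RAAG.gen Γ (a i)) (RAAG.gen Γ (b i)) m.toNat
      else altProd (RAAG.gen Γ (b i)) (RAAG.gen Γ (a i)) (-m).toNat)
    (F : (Fin n → ℤ) → RAAG Γ)
    (hF : ∀ x : Fin n → ℤ, F x = (List.ofFn fun i => γ i (x i)).prod) :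
    (∀ i j : Fin n, i ≠ j → ∀ l m : ℤ, Commute (γ i l) (γ j m)) ∧
    Function.Injective F ∧
    (∀ x : Fin n → ℤ,
      Multiplicative.toAdd (h (F x)) = ∑ i, |x i|) ∧
    (∀ x : Fin n → ℤ,
      RAAG.wordLength Γ (F x) = ∑ i, (x i).natAbs) := by
  obtain rfl : γ = fun i => altLine (RAAG.gen Γ (a i)) (RAAG.gen Γ (b i)) := funext₂ hγ
  obtain rfl : F = altFlat (fun i => RAAG.gen Γ (a i)) (fun i => RAAG.gen Γ (b i)) := funext hF
  refine ⟨fun i j hij => ?_, RAAG.altFlat_gen_injective ha hb hab hnadj,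
    RAAG.toAdd_map_altFlat_gen hh, RAAG.wordLength_altFlat_gen⟩
  obtain ⟨haa_adj, hab_adj, hba_adj, hbb_adj⟩ := hadj i j hij
  exact commute_altLine_altLine (RAAG.commute_gen_of_adj haa_adj) (RAAG.commute_gen_of_adj hab_adj)
    (RAAG.commute_gen_of_adj hba_adj) (RAAG.commute_gen_of_adj hbb_adj)

theorem raag_orthoplex_nonstandard_flat {V : Type*} [Fintype V] (Γ : SimpleGraph V)
    (k : ℕ) (a b : Fin (k + 1) → V)
    (ha : Function.Injective a) (hb : Function.Injective b)
    (hab : ∀ i j : Fin (k + 1), a i ≠ b j)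
    (hadj : ∀ i j : Fin (k + 1), i ≠ j →
      Γ.Adj (a i) (a j) ∧ Γ.Adj (a i) (b j) ∧ Γ.Adj (b i) (a j) ∧ Γ.Adj (b i) (b j))
    (hnadj : ∀ i : Fin (k + 1), ¬ Γ.Adj (a i) (b i))
    (h : RAAG Γ →* Multiplicative ℤ)
    (hh : ∀ v : V, h (RAAG.gen Γ v) = Multiplicative.ofAdd (1 : ℤ))
    (γ : Fin (k + 1) → ℤ → RAAG Γ)
    (hγ : ∀ (i : Fin (k + 1)) (m : ℤ), γ i m =
      if 0 ≤ m then altProd (RAAG.gen Γ (a i)) (RAAG.gen Γ (b i)) m.toNat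
      else altProd (RAAG.gen Γ (b i)) (RAAG.gen Γ (a i)) (-m).toNat)
    (F : (Fin (k + 1) → ℤ) → RAAG Γ)
    (hF : ∀ x : Fin (k + 1) → ℤ, F x = (List.ofFn fun i => γ i (x i)).prod) :
    (∀ i j : Fin (k + 1), i ≠ j → ∀ m n : ℤ, Commute (γ i m) (γ j n)) ∧
    Function.Injective F ∧
    (∀ x : Fin (k + 1) → ℤ,
      Multiplicative.toAdd (h (F x)) = ∑ i, |x i|) ∧
    (∀ x : Fin (k + 1) → ℤ,
      RAAG.wordLength Γ (F x) = ∑ i, (x i).natAbs) :=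
  raag_orthoplex_nonstandard_flat_general Γ a b ha hb hab hadj hnadj h hh γ hγ F hF
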